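/- arXiv:1904.00186 — 2 statements merged into one kernel-verified Lean document; each statement's English description precedes it below -/
import Mathlib

section
/- Let K be the unit equilateral triangle with vertices (0,0), (1,0), (1/2, √3/2). There exists a function u ∈ V_FM(K) (which may be taken to be a polynomial of degree at most 7) with ‖D²u‖_K ≠ 0 such that ‖u‖_K ≥ 0.073499·‖D²u‖_K; hence the optimal constant C₀ over all triangles of diameter at most 1 satisfies C₀ ≥ 0.073499. -/
/-!
The best constant is looked for among polynomials invariant under the symmetry group of the
triangle, that is, polynomials in the elementary symmetric functions `e₂`, `e₃` of the barycentric
coordinates. In degree at most `7`, vanishing at one vertex leaves the span of the nonconstant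
monomials `e₂ⁱ e₃ʲ`, and vanishing of the mean normal derivative on one edge is one linear
condition; the quotient `‖u‖ / ‖D²u‖` then has a maximum of about `0.0734997` on a six-dimensional
space. Rounding a maximizer to small rational coefficients gives `testPoly`, with quotient about
`0.0734991`.

In the affine coordinates `(s, t)` sending the triangle to the reference triangle `s, t ≥ 0`,
`s + t ≤ 1`, everything is rational: `∂ₓ = ∂ₛ` and `√3 ∂ᵧ = -∂ₛ + 2∂ₜ`, the common Jacobian `√3 / 2`
cancels from the quotient, and `∫ sᵃ tᵇ = a! b! / (a + b + 2)!` (`integral_refTri`), a consequence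
of the Beta integral. Polynomials are represented by lists of monomials, on which derivatives,
products and integrals are computable; the two squared norms and the three edge conditions become
identities between rational numbers that the kernel evaluates.
-/

open MeasureTheory Real

noncomputable section

/-- Points of the plane. -/
abbrev Pt : Type := ℝ × ℝ

/-- The closed triangle with vertices `O`, `A`, `B`. -/
def Tri (O A B : Pt) : Set Pt := convexHull ℝ {O, A, B}

/-- The triangle with vertices `O`, `A`, `B` is nondegenerate. -/
def Nondeg (O A B : Pt) : Prop := ¬ Collinear ℝ ({O, A, B} : Set Pt)

/-- Euclidean length of a vector of the plane. -/
def elen (v : Pt) : ℝ := Real.sqrt (v.1 ^ 2 + v.2 ^ 2)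

/-- Partial derivative in the `x` direction. -/
def pdx (u : Pt → ℝ) (p : Pt) : ℝ := fderiv ℝ u p (1, 0)

/-- Partial derivative in the `y` direction. -/
def pdy (u : Pt → ℝ) (p : Pt) : ℝ := fderiv ℝ u p (0, 1)

/-- `‖u‖_K²  = ∫_K u² dxdy`. -/
def l2sq (u : Pt → ℝ) (K : Set Pt) : ℝ := ∫ p in K, (u p) ^ 2

/-- `‖∇u‖_K² = ∫_K (u_x² + u_y²) dxdy`. -/
def h1sq (u : Pt → ℝ) (K : Set Pt) : ℝ := ∫ p in K, ((pdx u p) ^ 2 + (pdy u p) ^ 2)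

/-- `‖D²u‖_K² = ∫_K (u_xx² + u_xy² + u_yx² + u_yy²) dxdy`. -/
def h2sq (u : Pt → ℝ) (K : Set Pt) : ℝ :=
  ∫ p in K, ((pdx (pdx u) p) ^ 2 + (pdy (pdx u) p) ^ 2
    + (pdx (pdy u) p) ^ 2 + (pdy (pdy u) p) ^ 2)

/-- `‖u‖_K`. -/
def l2norm (u : Pt → ℝ) (K : Set Pt) : ℝ := Real.sqrt (l2sq u K)

/-- `‖∇u‖_K`. -/
def h1norm (u : Pt → ℝ) (K : Set Pt) : ℝ := Real.sqrt (h1sq u K)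

/-- `‖D²u‖_K`. -/
def h2norm (u : Pt → ℝ) (K : Set Pt) : ℝ := Real.sqrt (h2sq u K)

/-- `u` is twice continuously differentiable on an open neighborhood of `K`. -/
def Smooth2 (u : Pt → ℝ) (K : Set Pt) : Prop :=
  ∃ U : Set Pt, IsOpen U ∧ K ⊆ U ∧ ContDiffOn ℝ 2 u U

/-- `w` is continuously differentiable on an open neighborhood of `K`. -/
def Smooth1 (w : Pt → ℝ) (K : Set Pt) : Prop :=
  ∃ U : Set Pt, IsOpen U ∧ K ⊆ U ∧ ContDiffOn ℝ 1 w U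

/-- Line integral of `g` along the edge from `P` to `Q`:
`∫_e g ds = |Q − P| ∫₀¹ g(P + t(Q−P)) dt`. -/
def edgeInt (g : Pt → ℝ) (P Q : Pt) : ℝ :=
  elen (Q - P) * ∫ t in (0:ℝ)..1, g (P + t • (Q - P))

/-- Outward unit normal of the edge from `P` to `Q` of the triangle whose third vertex is `R`
(the unit vector perpendicular to `Q − P` pointing away from `R`). -/
def outNormal (P Q R : Pt) : Pt :=
  (if (Q - P).2 * (R - P).1 - (Q - P).1 * (R - P).2 ≤ 0 then (elen (Q - P))⁻¹
    else -(elen (Q - P))⁻¹) • ((Q - P).2, -((Q - P).1))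

/-- The normal derivative `∂u/∂n = ∇u ⋅ n` along the edge from `P` to `Q`,
with `n` the outward normal (w.r.t. third vertex `R`). -/
def normalDeriv (u : Pt → ℝ) (P Q R : Pt) (p : Pt) : ℝ := fderiv ℝ u p (outNormal P Q R)

/-- `u ∈ V_FM(K)` for the triangle `K` with vertices `O`, `A`, `B`: `u` is C² near `K`,
vanishes at the three vertices, and has vanishing mean normal derivative on each edge. -/
def MemVFM (u : Pt → ℝ) (O A B : Pt) : Prop :=
  Smooth2 u (Tri O A B) ∧ u O = 0 ∧ u A = 0 ∧ u B = 0 ∧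
  edgeInt (normalDeriv u O A B) O A = 0 ∧
  edgeInt (normalDeriv u A B O) A B = 0 ∧
  edgeInt (normalDeriv u B O A) B O = 0

/-- `w ∈ V_CR(K)` for the triangle `K` with vertices `O`, `A`, `B`: `w` is C¹ near `K`
and has vanishing mean value on each edge. -/
def MemVCR (w : Pt → ℝ) (O A B : Pt) : Prop :=
  Smooth1 w (Tri O A B) ∧
  edgeInt w O A = 0 ∧ edgeInt w A B = 0 ∧ edgeInt w B O = 0

/-- The longest edge length of the triangle with vertices `O`, `A`, `B`. -/
def longestEdge (O A B : Pt) : ℝ := max (elen (A - O)) (max (elen (B - A)) (elen (O - B)))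

/-- The linear map with matrix `[[1, α], [0, β]]`. -/
def Qmap (α β : ℝ) (p : Pt) : Pt := (p.1 + α * p.2, β * p.2)

/-- The inverse of `Qmap α β` (for `β ≠ 0`). -/
def Qinv (α β : ℝ) (p : Pt) : Pt := (p.1 - (α / β) * p.2, p.2 / β)

/-! ### Polynomials in two variables as lists of monomials -/

/-- A polynomial in `s`, `t` with rational coefficients, as a list of monomials: the entry
`(c, a, b)` stands for `c sᵃ tᵇ`. Repeated exponents are allowed. -/
abbrev BiPoly : Type := List (ℚ × ℕ × ℕ)

namespace BiPoly

/-- The value of a polynomial at the point `(s, t) = q`. -/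
def ev (L : BiPoly) (q : Pt) : ℝ := (L.map fun m => (m.1 : ℝ) * (q.1 ^ m.2.1 * q.2 ^ m.2.2)).sum

/-- The linear functional on polynomials that takes the value `φ a b` at `sᵃ tᵇ`. -/
def lin (φ : ℕ → ℕ → ℚ) (L : BiPoly) : ℚ := (L.map fun m => m.1 * φ m.2.1 m.2.2).sum

/-- Scalar multiple. -/
def smul (k : ℚ) (L : BiPoly) : BiPoly := L.map fun m => (k * m.1, m.2)

/-- Product. -/
def mul (L M : BiPoly) : BiPoly :=
  L.flatMap fun m => M.map fun n => (m.1 * n.1, m.2.1 + n.2.1, m.2.2 + n.2.2)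

/-- Partial derivative in `s`; a monomial without `s` gets the coefficient `0`, so the truncated
exponent `0 - 1` does no harm. -/
def dS (L : BiPoly) : BiPoly := L.map fun m => (m.1 * m.2.1, m.2.1 - 1, m.2.2)

/-- Partial derivative in `t`, with the same convention as `dS`. -/
def dT (L : BiPoly) : BiPoly := L.map fun m => (m.1 * m.2.2, m.2.1, m.2.2 - 1)

/-- Add a monomial to a polynomial, merging it with a monomial of the same exponents. -/
def insertMon (m : ℚ × ℕ × ℕ) : BiPoly → BiPoly
  | [] => [m]
  | n :: L => if m.2 = n.2 then (m.1 + n.1, n.2) :: L else n :: insertMon m L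

/-- Merge the monomials with equal exponents; this keeps the lists short. -/
def collect (L : BiPoly) : BiPoly := L.foldr insertMon []

/-- The derivative `-∂ₛ + 2∂ₜ`, which is `√3 ∂/∂y` in the coordinates `stCoord`. -/
def dY (L : BiPoly) : BiPoly := collect (smul (-1) (dS L) ++ smul 2 (dT L))

@[simp] lemma ev_nil (q : Pt) : ev [] q = 0 := rfl

@[simp] lemma ev_cons (m : ℚ × ℕ × ℕ) (L : BiPoly) (q : Pt) :
    ev (m :: L) q = (m.1 : ℝ) * (q.1 ^ m.2.1 * q.2 ^ m.2.2) + ev L q := by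
  simp [ev]

lemma ev_append (L M : BiPoly) (q : Pt) : ev (L ++ M) q = ev L q + ev M q := by
  simp [ev]

lemma ev_smul (k : ℚ) (L : BiPoly) (q : Pt) : ev (smul k L) q = k * ev L q := by
  induction L with
  | nil => simp [smul]
  | cons m L ih =>
    have : smul k (m :: L) = (k * m.1, m.2) :: smul k L := rfl
    rw [this, ev_cons, ev_cons, ih]
    push_cast
    ring

lemma lin_append (φ : ℕ → ℕ → ℚ) (L M : BiPoly) : lin φ (L ++ M) = lin φ L + lin φ M := by
  simp [lin]

lemma lin_smul (φ : ℕ → ℕ → ℚ) (k : ℚ) (L : BiPoly) : lin φ (smul k L) = k * lin φ L := by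
  induction L with
  | nil => simp [lin, smul]
  | cons m L ih =>
    simp only [lin, smul, List.map_cons, List.sum_cons] at ih ⊢
    rw [ih]
    ring

lemma ev_mul (L M : BiPoly) (q : Pt) : ev (mul L M) q = ev L q * ev M q := by
  induction L with
  | nil => simp [mul]
  | cons m L ih =>
    have h : mul (m :: L) M =
        (M.map fun n => (m.1 * n.1, m.2.1 + n.2.1, m.2.2 + n.2.2)) ++ mul L M := rfl
    have h2 : ev (M.map fun n => (m.1 * n.1, m.2.1 + n.2.1, m.2.2 + n.2.2)) q =
        (m.1 : ℝ) * (q.1 ^ m.2.1 * q.2 ^ m.2.2) * ev M q := by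
      clear h ih
      induction M with
      | nil => simp
      | cons n M ih2 =>
        rw [List.map_cons, ev_cons, ev_cons, ih2]
        push_cast
        ring
    rw [h, ev_append, h2, ih, ev_cons]
    ring

lemma ev_insertMon (m : ℚ × ℕ × ℕ) (L : BiPoly) (q : Pt) :
    ev (insertMon m L) q = ev (m :: L) q := by
  induction L with
  | nil => rfl
  | cons n L ih =>
    by_cases h : m.2 = n.2
    · simp only [insertMon, h, if_true, ev_cons]
      push_cast
      ring
    · simp only [insertMon, h, if_false, ev_cons, ih]
      ring

lemma ev_collect (L : BiPoly) (q : Pt) : ev (collect L) q = ev L q := by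
  induction L with
  | nil => rfl
  | cons m L ih =>
    have : collect (m :: L) = insertMon m (collect L) := rfl
    rw [this, ev_insertMon, ev_cons, ev_cons, ih]

lemma ev_dY (L : BiPoly) (q : Pt) : ev (dY L) q = -ev (dS L) q + 2 * ev (dT L) q := by
  rw [dY, ev_collect, ev_append, ev_smul, ev_smul]
  push_cast
  ring

lemma hasFDerivAt_ev (L : BiPoly) (q : Pt) :
    HasFDerivAt (ev L) (ev (dS L) q • ContinuousLinearMap.fst ℝ ℝ ℝ +
      ev (dT L) q • ContinuousLinearMap.snd ℝ ℝ ℝ) q := by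
  induction L with
  | nil =>
    have h : ev [] = fun _ : Pt => (0 : ℝ) := rfl
    rw [h]
    simpa [dS, dT] using hasFDerivAt_const (0 : ℝ) q
  | cons m L ih =>
    have h : ev (m :: L) = fun q => (m.1 : ℝ) * (q.1 ^ m.2.1 * q.2 ^ m.2.2) + ev L q := by
      funext q; simp
    rw [h]
    have h1 : HasFDerivAt (fun q : Pt => q.1) (ContinuousLinearMap.fst ℝ ℝ ℝ) q := hasFDerivAt_fst
    have h2 : HasFDerivAt (fun q : Pt => q.2) (ContinuousLinearMap.snd ℝ ℝ ℝ) q := hasFDerivAt_snd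
    refine ((((h1.pow m.2.1).mul (h2.pow m.2.2)).const_mul (m.1 : ℝ)).add ih).congr_fderiv ?_
    have e1 : dS (m :: L) = (m.1 * m.2.1, m.2.1 - 1, m.2.2) :: dS L := rfl
    have e2 : dT (m :: L) = (m.1 * m.2.2, m.2.1, m.2.2 - 1) :: dT L := rfl
    rw [e1, e2, ev_cons, ev_cons]
    ext <;> simp <;> ring

/-- Integrating a polynomial along a map `g` into the plane reduces to the integrals of the
monomials. -/
lemma integral_ev {X : Type*} [MeasurableSpace X] (μ : Measure X) (g : X → Pt) (φ : ℕ → ℕ → ℚ)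
    (hi : ∀ a b : ℕ, Integrable (fun x => (g x).1 ^ a * (g x).2 ^ b) μ)
    (hφ : ∀ a b : ℕ, ∫ x, (g x).1 ^ a * (g x).2 ^ b ∂μ = φ a b) (L : BiPoly) :
    Integrable (fun x => ev L (g x)) μ ∧ ∫ x, ev L (g x) ∂μ = lin φ L := by
  induction L with
  | nil => simp [lin]
  | cons m L ih =>
    simp only [ev_cons]
    have h := (hi m.2.1 m.2.2).const_mul (m.1 : ℝ)
    refine ⟨h.add ih.1, ?_⟩
    rw [integral_add h ih.1, integral_const_mul, hφ, ih.2]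
    simp [lin]

/-- The polynomial obtained by substituting `σ`, `τ` for `s`, `t`. -/
def toMv (σ τ : MvPolynomial (Fin 2) ℝ) (L : BiPoly) : MvPolynomial (Fin 2) ℝ :=
  (L.map fun m => MvPolynomial.C (m.1 : ℝ) * (σ ^ m.2.1 * τ ^ m.2.2)).sum

lemma eval_toMv (σ τ : MvPolynomial (Fin 2) ℝ) (L : BiPoly) (f : Fin 2 → ℝ) :
    MvPolynomial.eval f (toMv σ τ L) = ev L (MvPolynomial.eval f σ, MvPolynomial.eval f τ) := by
  induction L with
  | nil => simp [toMv]
  | cons m L ih =>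
    have : toMv σ τ (m :: L) =
      MvPolynomial.C (m.1 : ℝ) * (σ ^ m.2.1 * τ ^ m.2.2) + toMv σ τ L := by simp [toMv]
    rw [this, map_add, ih, ev_cons]
    simp

lemma totalDegree_toMv {σ τ : MvPolynomial (Fin 2) ℝ} (hσ : σ.totalDegree ≤ 1)
    (hτ : τ.totalDegree ≤ 1) {d : ℕ} (L : BiPoly) (hL : ∀ m ∈ L, m.2.1 + m.2.2 ≤ d) :
    (toMv σ τ L).totalDegree ≤ d := by
  induction L with
  | nil => simp [toMv]
  | cons m L ih =>
    have : toMv σ τ (m :: L) =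
      MvPolynomial.C (m.1 : ℝ) * (σ ^ m.2.1 * τ ^ m.2.2) + toMv σ τ L := by simp [toMv]
    rw [this]
    refine (MvPolynomial.totalDegree_add _ _).trans (max_le ?_ ?_)
    · have h0 := MvPolynomial.totalDegree_mul (MvPolynomial.C (σ := Fin 2) (m.1 : ℝ))
        (σ ^ m.2.1 * τ ^ m.2.2)
      have h1 := MvPolynomial.totalDegree_mul (σ ^ m.2.1) (τ ^ m.2.2)
      have h2 := MvPolynomial.totalDegree_pow σ m.2.1
      have h3 := MvPolynomial.totalDegree_pow τ m.2.2
      have h4 := hL m (by simp)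
      rw [MvPolynomial.totalDegree_C] at h0
      have h5 := Nat.mul_le_mul_left m.2.1 hσ
      have h6 := Nat.mul_le_mul_left m.2.2 hτ
      omega
    · exact ih fun n hn => hL n (by simp [hn])

end BiPoly

open BiPoly

/-! ### Moments of the edges and of the reference triangle -/

/-- The Beta integral `∫₀¹ sᵃ (1-s)ᵇ ds`. -/
lemma integral_pow_mul_one_sub_pow (a b : ℕ) :
    ∫ s in (0 : ℝ)..1, s ^ a * (1 - s) ^ b = a.factorial * b.factorial / (a + b + 1).factorial := by
  induction b generalizing a with
  | zero =>
    simp [integral_pow, Nat.factorial_succ]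
    field_simp
  | succ b ih =>
    -- Integration by parts trades a factor `1 - s` for a factor `s`.
    have hF : ∀ s ∈ Set.uIcc (0 : ℝ) 1, HasDerivAt (fun s : ℝ => s ^ (a + 1) * (1 - s) ^ (b + 1))
        ((a + 1) * (s ^ a * (1 - s) ^ (b + 1)) - (b + 1) * (s ^ (a + 1) * (1 - s) ^ b)) s := by
      intro s _
      have h := ((hasDerivAt_id s).pow (a + 1)).mul (((hasDerivAt_id s).const_sub 1).pow (b + 1))
      refine (h.congr_deriv ?_)
      simp
      ring
    have h := intervalIntegral.integral_eq_sub_of_hasDerivAt hF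
      (Continuous.intervalIntegrable (by fun_prop) _ _)
    rw [intervalIntegral.integral_sub (Continuous.intervalIntegrable (by fun_prop) _ _)
      (Continuous.intervalIntegrable (by fun_prop) _ _), intervalIntegral.integral_const_mul,
      intervalIntegral.integral_const_mul, ih] at h
    have e : a + 1 + b + 1 = a + (b + 1) + 1 := by ring
    rw [e] at h
    simp only [Nat.factorial_succ a, Nat.factorial_succ b, Nat.cast_mul] at h ⊢
    simp at h
    have ha : (a : ℝ) + 1 ≠ 0 := by positivity
    apply mul_left_cancel₀ ha
    rw [sub_eq_zero.1 h]
    push_cast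
    ring

/-- The reference triangle `s, t ≥ 0`, `s + t ≤ 1`. -/
def refTri : Set Pt := {q | 0 ≤ q.1 ∧ 0 ≤ q.2 ∧ q.1 + q.2 ≤ 1}

lemma isClosed_refTri : IsClosed refTri := by
  apply IsClosed.and
  · exact isClosed_le (by fun_prop) (by fun_prop)
  · exact (isClosed_le (by fun_prop) (by fun_prop)).and (isClosed_le (by fun_prop) (by fun_prop))

lemma isCompact_refTri : IsCompact refTri := by
  refine (isCompact_Icc (a := ((0, 0) : Pt)) (b := ((1, 1) : Pt))).of_isClosed_subset
    isClosed_refTri ?_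
  rintro ⟨s, t⟩ ⟨h1, h2, h3⟩
  simp only at h1 h2 h3
  exact ⟨⟨h1, h2⟩, ⟨by simp only; linarith, by simp only; linarith⟩⟩

lemma refTri_eq : refTri = convexHull ℝ {((0, 0) : Pt), (1, 0), (0, 1)} := by
  apply Set.Subset.antisymm
  · rintro ⟨s, t⟩ ⟨h1, h2, h3⟩
    simp only at h1 h2 h3
    have hc := convex_convexHull ℝ {((0, 0) : Pt), (1, 0), (0, 1)}
    have hm := subset_convexHull ℝ {((0, 0) : Pt), (1, 0), (0, 1)}
    have := hc.sum_mem (t := Finset.univ) (w := ![1 - s - t, s, t])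
      (z := ![((0, 0) : Pt), (1, 0), (0, 1)])
      (by intro i _; fin_cases i <;> simp <;> linarith)
      (by simp [Fin.sum_univ_three]; ring)
      (by intro i _; fin_cases i <;> apply hm <;> simp)
    simpa [Fin.sum_univ_three] using this
  · apply convexHull_min
    · intro q hq
      simp only [Set.mem_insert_iff, Set.mem_singleton_iff] at hq
      rcases hq with rfl | rfl | rfl <;> simp [refTri]
    · rintro ⟨s, t⟩ ⟨h1, h2, h3⟩ ⟨s', t'⟩ ⟨h1', h2', h3'⟩ α β hα hβ hαβ
      simp only at h1 h2 h3 h1' h2' h3'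
      refine ⟨?_, ?_, ?_⟩
      · simp; positivity
      · simp; positivity
      · simp
        nlinarith [mul_le_mul_of_nonneg_left h3 hα, mul_le_mul_of_nonneg_left h3' hβ]

lemma integrableOn_refTri {f : Pt → ℝ} (hf : Continuous f) : IntegrableOn f refTri :=
  hf.continuousOn.integrableOn_compact isCompact_refTri

/-- The moment `∫ sᵃ tᵇ` of the reference triangle. -/
def triMoment (a b : ℕ) : ℚ := a.factorial * b.factorial / (a + b + 2).factorial

lemma integral_refTri (a b : ℕ) : ∫ q in refTri, q.1 ^ a * q.2 ^ b = (triMoment a b : ℝ) := by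
  have hm : MeasurableSet refTri := isClosed_refTri.measurableSet
  have hi : Integrable (refTri.indicator fun q : Pt => q.1 ^ a * q.2 ^ b) :=
    (integrable_indicator_iff hm).2 (integrableOn_refTri (by fun_prop))
  rw [← integral_indicator hm, Measure.volume_eq_prod, integral_prod _ hi]
  have inner : ∀ s : ℝ, (∫ t : ℝ, refTri.indicator (fun q : Pt => q.1 ^ a * q.2 ^ b) (s, t)) =
      (Set.Icc (0 : ℝ) 1).indicator (fun s => (b + 1 : ℝ)⁻¹ * (s ^ a * (1 - s) ^ (b + 1))) s := by
    intro s
    by_cases hs : s ∈ Set.Icc (0 : ℝ) 1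
    · have e : (fun t : ℝ => refTri.indicator (fun q : Pt => q.1 ^ a * q.2 ^ b) (s, t)) =
          (Set.Icc (0 : ℝ) (1 - s)).indicator fun t => s ^ a * t ^ b := by
        funext t
        have : (s, t) ∈ refTri ↔ t ∈ Set.Icc (0 : ℝ) (1 - s) := by
          simp only [refTri, Set.mem_ofPred_eq, Set.mem_Icc]
          exact ⟨fun h => ⟨h.2.1, by linarith [h.2.2]⟩, fun h => ⟨hs.1, h.1, by linarith [h.2]⟩⟩
        simp only [Set.indicator, this]
      rw [e, integral_indicator measurableSet_Icc, integral_Icc_eq_integral_Ioc,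
        ← intervalIntegral.integral_of_le (by linarith [hs.2]), intervalIntegral.integral_const_mul,
        integral_pow, Set.indicator_of_mem hs]
      simp
      ring
    · have e : (fun t : ℝ => refTri.indicator (fun q : Pt => q.1 ^ a * q.2 ^ b) (s, t)) =
          fun _ => 0 := by
        funext t
        apply Set.indicator_of_notMem
        rintro ⟨h1, h2, h3⟩
        simp only at h1 h2 h3
        exact hs ⟨h1, by linarith⟩
      rw [e, Set.indicator_of_notMem hs, integral_zero]
  simp_rw [inner]
  rw [integral_indicator measurableSet_Icc, integral_Icc_eq_integral_Ioc,
    ← intervalIntegral.integral_of_le zero_le_one, intervalIntegral.integral_const_mul,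
    integral_pow_mul_one_sub_pow, triMoment, Nat.factorial_succ b]
  push_cast
  have e : a + (b + 1) + 1 = a + b + 2 := by ring
  rw [e]
  field_simp

lemma integral_refTri_ev (L : BiPoly) : ∫ q in refTri, ev L q = (lin triMoment L : ℝ) :=
  (integral_ev (volume.restrict refTri) id triMoment
    (fun a b => integrableOn_refTri (by simp only [id]; fun_prop)) integral_refTri L).2

/-- The moment `∫₀¹ sᵃ tᵇ` of the edge `(s, t) = (τ, 0)`. -/
def edge1 (a b : ℕ) : ℚ := 0 ^ b / (a + 1)
/-- The moment `∫₀¹ sᵃ tᵇ` of the edge `(s, t) = (1 - τ, τ)`. -/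
def edge2 (a b : ℕ) : ℚ := b.factorial * a.factorial / (b + a + 1).factorial
/-- The moment `∫₀¹ sᵃ tᵇ` of the edge `(s, t) = (0, 1 - τ)`. -/
def edge3 (a b : ℕ) : ℚ := 0 ^ a / (b + 1)

lemma integral_edge_ev (g : ℝ → Pt) (hg : Continuous g) (φ : ℕ → ℕ → ℚ)
    (hφ : ∀ a b : ℕ, ∫ τ in (0 : ℝ)..1, (g τ).1 ^ a * (g τ).2 ^ b = φ a b) (L : BiPoly) :
    ∫ τ in (0 : ℝ)..1, ev L (g τ) = (lin φ L : ℝ) := by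
  simp only [intervalIntegral.integral_of_le zero_le_one] at hφ ⊢
  refine (integral_ev _ g φ (fun a b => ?_) hφ L).2
  exact ((Continuous.integrableOn_Icc (by fun_prop)).mono_set Set.Ioc_subset_Icc_self)

lemma integral_edge1 (L : BiPoly) :
    ∫ τ in (0 : ℝ)..1, ev L (τ, 0) = (lin edge1 L : ℝ) := by
  refine integral_edge_ev _ (by fun_prop) _ (fun a b => ?_) L
  simp [edge1, integral_pow]
  ring

lemma integral_edge2 (L : BiPoly) :
    ∫ τ in (0 : ℝ)..1, ev L (1 - τ, τ) = (lin edge2 L : ℝ) := by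
  refine integral_edge_ev (fun τ => (1 - τ, τ)) (by fun_prop) _ (fun a b => ?_) L
  simp only [mul_comm, edge2]
  rw [integral_pow_mul_one_sub_pow]
  push_cast
  ring

lemma integral_edge3 (L : BiPoly) :
    ∫ τ in (0 : ℝ)..1, ev L (0, 1 - τ) = (lin edge3 L : ℝ) := by
  refine integral_edge_ev (fun τ => (0, 1 - τ)) (by fun_prop) _ (fun a b => ?_) L
  have h := integral_pow_mul_one_sub_pow 0 b
  simp only [pow_zero, one_mul, zero_add] at h
  simp only [edge3]
  rw [intervalIntegral.integral_const_mul, h, Nat.factorial_succ]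
  push_cast
  field_simp
  simp

/-! ### The equilateral triangle in affine coordinates -/

/-- The affine coordinates `(s, t)` in which the equilateral triangle is the reference triangle. -/
def stCoord (p : Pt) : Pt := (p.1 - √3 / 3 * p.2, 2 * √3 / 3 * p.2)

/-- The inverse of `stCoord`. -/
def ofST : Pt →L[ℝ] Pt := LinearMap.toContinuousLinearMap
  (Matrix.toLin (.finTwoProd ℝ) (.finTwoProd ℝ) !![1, 1 / 2; 0, √3 / 2])

lemma ofST_apply (q : Pt) : ofST q = (q.1 + 1 / 2 * q.2, √3 / 2 * q.2) := by
  rw [ofST, Matrix.toLin_finTwoProd_toContinuousLinearMap]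
  ext <;> simp

lemma det_ofST : ofST.det = √3 / 2 := by
  simp [ofST, LinearMap.det_toLin, ContinuousLinearMap.det]

lemma sqrt_three_sq : √3 * √3 = (3 : ℝ) := Real.mul_self_sqrt (by norm_num)

lemma stCoord_ofST (q : Pt) : stCoord (ofST q) = q := by
  rw [ofST_apply, stCoord]
  ext
  · simp only
    linear_combination (-q.2 / 6) * sqrt_three_sq
  · simp only
    linear_combination (q.2 / 3) * sqrt_three_sq

lemma tri_eq : Tri ((0, 0) : Pt) ((1, 0) : Pt) ((1 / 2, √3 / 2) : Pt) = ofST '' refTri := by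
  have h : ofST '' {((0, 0) : Pt), (1, 0), (0, 1)} = {(0, 0), (1, 0), (1 / 2, √3 / 2)} := by
    simp [Set.image_insert_eq, ofST_apply]
  rw [refTri_eq, Tri, ← h]
  exact (LinearMap.image_convexHull (ofST : Pt →ₗ[ℝ] Pt) _).symm

lemma integral_tri (f : Pt → ℝ) :
    ∫ p in Tri ((0, 0) : Pt) ((1, 0) : Pt) ((1 / 2, √3 / 2) : Pt), f p =
      √3 / 2 * ∫ q in refTri, f (ofST q) := by
  rw [tri_eq, integral_image_eq_integral_abs_det_fderiv_smul volume
    isClosed_refTri.measurableSet (fun q _ => ofST.hasFDerivAt.hasFDerivWithinAt)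
    (fun x _ y _ h => by rw [← stCoord_ofST x, h, stCoord_ofST]), det_ofST]
  rw [abs_of_nonneg (by positivity)]
  simp only [smul_eq_mul]
  rw [integral_const_mul]

lemma hasFDerivAt_ev_stCoord (L : BiPoly) (p : Pt) :
    HasFDerivAt (fun p => ev L (stCoord p))
      (ev (dS L) (stCoord p) • ContinuousLinearMap.fst ℝ ℝ ℝ +
        (√3 / 3 * ev (dY L) (stCoord p)) • ContinuousLinearMap.snd ℝ ℝ ℝ) p := by
  have h1 : HasFDerivAt (fun q : Pt => q.1) (ContinuousLinearMap.fst ℝ ℝ ℝ) p := hasFDerivAt_fst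
  have h2 : HasFDerivAt (fun q : Pt => q.2) (ContinuousLinearMap.snd ℝ ℝ ℝ) p := hasFDerivAt_snd
  have h : HasFDerivAt stCoord _ p :=
    (h1.sub (h2.const_mul (√3 / 3))).prodMk (h2.const_mul (2 * √3 / 3))
  refine ((hasFDerivAt_ev L (stCoord p)).comp p h).congr_fderiv ?_
  rw [ev_dY]
  ext <;> simp
  ring

lemma pdx_ev (k : ℝ) (L : BiPoly) :
    pdx (fun p => k * ev L (stCoord p)) = fun p => k * ev (dS L) (stCoord p) := by
  funext p
  rw [pdx, ((hasFDerivAt_ev_stCoord L p).const_mul k).fderiv]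
  simp

lemma pdy_ev (k : ℝ) (L : BiPoly) :
    pdy (fun p => k * ev L (stCoord p)) = fun p => √3 / 3 * k * ev (dY L) (stCoord p) := by
  funext p
  rw [pdy, ((hasFDerivAt_ev_stCoord L p).const_mul k).fderiv]
  simp
  ring

/-- Nine times the integrand of the `D²` seminorm, in the affine coordinates. -/
def hess (L : BiPoly) : BiPoly :=
  smul 9 (mul (dS (dS L)) (dS (dS L))) ++ smul 3 (mul (dY (dS L)) (dY (dS L))) ++
    smul 3 (mul (dS (dY L)) (dS (dY L))) ++ mul (dY (dY L)) (dY (dY L))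

lemma l2sq_ev (L : BiPoly) :
    l2sq (fun p => ev L (stCoord p)) (Tri ((0, 0) : Pt) ((1, 0) : Pt) ((1 / 2, √3 / 2) : Pt)) =
      √3 / 2 * (lin triMoment (mul L L) : ℝ) := by
  rw [l2sq, integral_tri, ← integral_refTri_ev]
  simp only [stCoord_ofST, ev_mul, sq]

lemma h2sq_ev (L : BiPoly) :
    h2sq (fun p => ev L (stCoord p)) (Tri ((0, 0) : Pt) ((1, 0) : Pt) ((1 / 2, √3 / 2) : Pt)) =
      √3 / 2 * ((lin triMoment (hess L) : ℝ) / 9) := by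
  have hx := pdx_ev 1 L
  have hy := pdy_ev 1 L
  simp only [one_mul, mul_one] at hx hy
  have hxx := pdx_ev 1 (dS L)
  have hxy := pdy_ev 1 (dS L)
  simp only [one_mul, mul_one] at hxx hxy
  rw [h2sq, integral_tri, ← integral_refTri_ev]
  congr 1
  rw [div_eq_inv_mul, ← integral_const_mul]
  congr 1
  funext q
  simp only [hx, hy, hxx, hxy, pdx_ev, pdy_ev, stCoord_ofST, hess, ev_append, ev_smul, ev_mul]
  push_cast
  have h3 := sqrt_three_sq
  have h9 : √3 ^ 4 = (9 : ℝ) := by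
    rw [show √3 ^ 4 = (√3 * √3) * (√3 * √3) by ring, h3]; norm_num
  linear_combination (1 / 9 * (ev (dY (dS L)) q) ^ 2 + 1 / 9 * (ev (dS (dY L)) q) ^ 2) * h3 +
    (1 / 81 * (ev (dY (dY L)) q) ^ 2) * h9

/-- An edge condition in affine coordinates. The normal derivative is a constant times the derivative
along `Q - P` rotated by a right angle, which in turn is `c` times a rational polynomial `M`; so the
condition holds as soon as the mean of `M` over the edge vanishes. -/
lemma edgeInt_normalDeriv (L M : BiPoly) (φ : ℕ → ℕ → ℚ) (P Q R : Pt) (c : ℝ) (g : ℝ → Pt)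
    (hg : ∀ τ, stCoord (P + τ • (Q - P)) = g τ)
    (hM : ∀ q, (Q - P).2 * ev (dS L) q - (Q - P).1 * (√3 / 3 * ev (dY L) q) = c * ev M q)
    (hφ : ∫ τ in (0 : ℝ)..1, ev M (g τ) = (lin φ M : ℝ)) (h0 : lin φ M = 0) :
    edgeInt (normalDeriv (fun p => ev L (stCoord p)) P Q R) P Q = 0 := by
  have key : ∃ k : ℝ, ∀ τ : ℝ, normalDeriv (fun p => ev L (stCoord p)) P Q R (P + τ • (Q - P)) =
      k * (c * ev M (g τ)) := by
    refine ⟨if (Q - P).2 * (R - P).1 - (Q - P).1 * (R - P).2 ≤ 0 then (elen (Q - P))⁻¹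
      else -(elen (Q - P))⁻¹, fun τ => ?_⟩
    rw [normalDeriv, outNormal, map_smul, (hasFDerivAt_ev_stCoord L _).fderiv, hg, ← hM,
      smul_eq_mul]
    congr 1
    simp
    ring
  obtain ⟨k, hk⟩ := key
  rw [edgeInt]
  simp_rw [hk]
  rw [intervalIntegral.integral_const_mul, intervalIntegral.integral_const_mul, hφ, h0]
  simp

/-! ### The test function -/

/-- With `λ₁ = 1 - s - t`, `λ₂ = s`, `λ₃ = t` the barycentric coordinates and
`e₂ = λ₁λ₂ + λ₁λ₃ + λ₂λ₃`, `e₃ = λ₁λ₂λ₃`, this is the expansion of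
`350 e₂ + 210 e₂² + 210 e₂³ - 1191 e₃ - 630 e₂e₃ - 140 e₂²e₃ + 1050 e₃²`. -/
def testPoly : BiPoly :=
  [(350, 0, 1), (350, 1, 0), (-140, 0, 2), (-1121, 1, 1), (-140, 2, 0), (-210, 0, 3), (351, 1, 2),
    (351, 2, 1), (-210, 3, 0), (-420, 0, 4), (-350, 1, 3), (770, 2, 2), (-350, 3, 1), (-420, 4, 0),
    (630, 0, 5), (1680, 1, 4), (770, 2, 3), (770, 3, 2), (1680, 4, 1), (630, 5, 0), (-210, 0, 6),
    (-1050, 1, 5), (-1330, 2, 4), (-910, 3, 3), (-1330, 4, 2), (-1050, 5, 1), (-210, 6, 0),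
    (140, 1, 6), (420, 2, 5), (700, 3, 4), (700, 4, 3), (420, 5, 2), (140, 6, 1)]

lemma contDiff_ev (L : BiPoly) : ContDiff ℝ 2 (fun p => ev L (stCoord p)) := by
  induction L with
  | nil => simpa using contDiff_const
  | cons m L ih =>
    simp only [ev_cons]
    refine ContDiff.add ?_ ih
    simp only [stCoord]
    fun_prop

lemma lin_testPoly_sq : lin triMoment (mul testPoly testPoly) = 865588571 / 240240 := by
  decide +kernel

lemma lin_hess_testPoly : lin triMoment (hess testPoly) = 198087992 / 33 := by
  have hxx : lin triMoment (mul (dS (dS testPoly)) (dS (dS testPoly))) = 16872661 / 99 := by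
    decide +kernel
  have hxy : lin triMoment (mul (dY (dS testPoly)) (dY (dS testPoly))) = 48426013 / 99 := by
    decide +kernel
  have hyx : lin triMoment (mul (dS (dY testPoly)) (dS (dY testPoly))) = 48426013 / 99 := by
    decide +kernel
  have hyy : lin triMoment (mul (dY (dY testPoly)) (dY (dY testPoly))) = 16872661 / 11 := by
    decide +kernel
  simp only [hess, lin_append, lin_smul, hxx, hxy, hyx, hyy]
  norm_num

lemma memVFM_testPoly : MemVFM (fun p => ev testPoly (stCoord p))
    ((0, 0) : Pt) ((1, 0) : Pt) ((1 / 2, √3 / 2) : Pt) := by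
  have h3 := sqrt_three_sq
  refine ⟨⟨Set.univ, isOpen_univ, Set.subset_univ _, (contDiff_ev _).contDiffOn⟩, ?_, ?_, ?_,
    ?_, ?_, ?_⟩
  · have : stCoord (0, 0) = (0, 0) := by simp [stCoord]
    simp only [this]
    norm_num [testPoly]
  · have : stCoord (1, 0) = (1, 0) := by simp [stCoord]
    simp only [this]
    norm_num [testPoly]
  · have : stCoord (1 / 2, √3 / 2) = (0, 1) := by
      ext <;> simp only [stCoord] <;> linarith
    simp only [this]
    norm_num [testPoly]
  · refine edgeInt_normalDeriv _ (dY testPoly) edge1 _ _ _ (-(√3 / 3)) (fun τ => (τ, 0)) ?_ ?_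
      (integral_edge1 _) (by decide +kernel)
    · intro τ
      simp [stCoord]
    · intro q
      simp
  · refine edgeInt_normalDeriv _ (dS testPoly ++ dT testPoly) edge2 _ _ _ (√3 / 3)
      (fun τ => (1 - τ, τ)) ?_ ?_ (integral_edge2 _) (by decide +kernel)
    · intro τ
      ext
      · simp [stCoord]
        linear_combination (-τ / 6) * h3
      · simp [stCoord]
        linear_combination (τ / 3) * h3
    · intro q
      rw [ev_append, ev_dY]
      simp
      ring
  · refine edgeInt_normalDeriv _ (smul (-2) (dS testPoly) ++ dT testPoly) edge3 _ _ _ (√3 / 3)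
      (fun τ => (0, 1 - τ)) ?_ ?_ (integral_edge3 _) (by decide +kernel)
    · intro τ
      ext
      · simp [stCoord]
        linear_combination ((τ - 1) / 6) * h3
      · simp [stCoord]
        linear_combination ((1 - τ) / 3) * h3
    · intro q
      rw [ev_append, ev_smul, ev_dY]
      simp
      ring

/-- On the unit equilateral triangle `K` with vertices `(0,0)`, `(1,0)`,
`(1/2, √3/2)` there exists `u ∈ V_FM(K)` (a polynomial of degree at most 7) with
`‖D²u‖_K ≠ 0` and `‖u‖_K ≥ 0.073499 ‖D²u‖_K`. -/
theorem stmt_2 :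
    ∃ u : Pt → ℝ,
      (∃ P : MvPolynomial (Fin 2) ℝ, P.totalDegree ≤ 7 ∧
        ∀ p : Pt, u p = MvPolynomial.eval (fun i : Fin 2 => if i = 0 then p.1 else p.2) P) ∧
      MemVFM u ((0, 0) : Pt) ((1, 0) : Pt) ((1/2, Real.sqrt 3 / 2) : Pt) ∧
      h2norm u (Tri ((0, 0) : Pt) ((1, 0) : Pt) ((1/2, Real.sqrt 3 / 2) : Pt)) ≠ 0 ∧
      0.073499 * h2norm u (Tri ((0, 0) : Pt) ((1, 0) : Pt) ((1/2, Real.sqrt 3 / 2) : Pt)) ≤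
        l2norm u (Tri ((0, 0) : Pt) ((1, 0) : Pt) ((1/2, Real.sqrt 3 / 2) : Pt)) := by
  have hh : 0 < √3 / 2 * ((198087992 / 33 : ℝ) / 9) := by positivity
  have h2 := h2sq_ev testPoly
  have l2 := l2sq_ev testPoly
  rw [lin_hess_testPoly] at h2
  rw [lin_testPoly_sq] at l2
  push_cast at h2 l2
  refine ⟨fun p => ev testPoly (stCoord p), ?_, memVFM_testPoly, ?_, ?_⟩
  · have hτ : (MvPolynomial.C (2 * √3 / 3) * MvPolynomial.X 1 :
        MvPolynomial (Fin 2) ℝ).totalDegree ≤ 1 :=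
      (MvPolynomial.totalDegree_mul _ _).trans (by simp)
    have hσ : (MvPolynomial.X 0 - MvPolynomial.C (√3 / 3) * MvPolynomial.X 1 :
        MvPolynomial (Fin 2) ℝ).totalDegree ≤ 1 :=
      (MvPolynomial.totalDegree_sub _ _).trans (max_le (by simp)
        ((MvPolynomial.totalDegree_mul _ _).trans (by simp)))
    refine ⟨toMv _ _ testPoly, totalDegree_toMv hσ hτ testPoly (by decide +kernel), fun p => ?_⟩
    rw [eval_toMv]
    simp [stCoord]
  · rw [h2norm, h2]
    exact (Real.sqrt_pos.2 hh).ne'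
  · rw [h2norm, h2, l2norm, l2]
    apply Real.le_sqrt_of_sq_le
    rw [mul_pow, Real.sq_sqrt hh.le]
    have : (0 : ℝ) < √3 := by positivity
    nlinarith
end
end

section
/- (Theorem 5, perturbation of C₁) Let b > 0, a ∈ ℝ, and α, ε ∈ ℝ with |α| ≤ 1/2 and |ε| ≤ 1/2. Let K be the triangle with vertices (0,0), (1,0), (a, b) and K̃ the triangle with vertices (0,0), (1,0), (a + αb, (1+ε)b). Suppose C ≥ 0 satisfies ‖∇u‖_K ≤ C·‖D²u‖_K for all u ∈ V_FM(K). If ε ≥ 0, then ‖∇ũ‖_{K̃} ≤ (1 + (3/2)|α| + 2|ε| + (3/2)α² + ε²)·C·‖D²ũ‖_{K̃} for all ũ ∈ V_FM(K̃); if ε ≤ 0, then ‖∇ũ‖_{K̃} ≤ (1 + (3/2)|α| + |ε| + (3/2)α² + 2ε²)·C·‖D²ũ‖_{K̃} for all ũ ∈ V_FM(K̃). -/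
/-!
The linear map `Q = [[1, α], [0, β]]`, `β = 1 + ε`, carries `K` onto `K̃`. A function of `V_FM`
has vanishing edge means of its full gradient (`edge_grad_zero`): the tangential mean is a
difference of vertex values. This condition is invariant under linear maps, so `u ∘ Q ∈ V_FM(K)`
for every `u ∈ V_FM(K̃)` (`MemVFM.comp`).

Let `s` be the largest singular value of `Q`, so that the smallest one is `β / s`. Pointwise,
`∇(u ∘ Q) = Qᵀ ∇u` and `D²(u ∘ Q) = Qᵀ D²u Q`, hence `(β / s) |∇u| ≤ |∇(u ∘ Q)|` and
`|D²(u ∘ Q)| ≤ s² |D²u|`. The Jacobian factors of the two sides cancel, so the constant grows by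
at most `s³ / β` (`transfer`, `perturb`).

It remains to bound `s³ / β`, where `s = (r + √(r² + 4β)) / 2` and `r = √(α² + ε²)`. The bound is
attained at `α = 0, ε ≥ 0` and at `α = 0, ε = -1/2`, so `s` cannot be replaced by a crude majorant.
From `s² = r s + β` one gets `s³ = (r² + β) s + r β`; the second root is bounded by
`2 + ε + α² / (2 (2 + ε))`, and `r` by its secant majorant on each of the cones `|α| ≤ |ε|` and
`|ε| ≤ |α|`, which leaves polynomial inequalities (`sv_bound_pos`, `sv_bound_neg`).
-/

open MeasureTheory Real

noncomputable section

/-! ### Singular values of the shear-and-stretch matrix -/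

/-- A binary quadratic form with nonnegative diagonal and vanishing determinant is nonnegative. -/
lemma quad_nonneg {A B D : ℝ} (hA : 0 ≤ A) (hD : 0 ≤ D) (h : A * D = B ^ 2) (x y : ℝ) :
    0 ≤ A * x ^ 2 + 2 * B * (x * y) + D * y ^ 2 := by
  rcases hA.eq_or_lt with h0 | h0
  · have hB : B = 0 := by
      rw [← h0, zero_mul] at h
      exact pow_eq_zero_iff (two_ne_zero) |>.1 h.symm
    rw [← h0, hB]
    nlinarith [mul_nonneg hD (sq_nonneg y)]
  · refine nonneg_of_mul_nonneg_right ?_ h0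
    have : A * (A * x ^ 2 + 2 * B * (x * y) + D * y ^ 2) = (A * x + B * y) ^ 2 := by
      linear_combination y ^ 2 * h
    rw [this]
    positivity

/-- The numbers `α`, `β`, `l` are related as the entries of `Q = [[1, α], [0, β]]` and the larger
eigenvalue `l` of `Q Qᵀ`: `l` is a root of the characteristic polynomial, at least the mean of
the two roots. -/
def IsTopEig (α β l : ℝ) : Prop :=
  l ^ 2 - (1 + α ^ 2 + β ^ 2) * l + β ^ 2 = 0 ∧ 1 + α ^ 2 + β ^ 2 ≤ 2 * l

lemma IsTopEig.diag {α β l : ℝ} (h : IsTopEig α β l) : 1 + α ^ 2 ≤ l ∧ β ^ 2 ≤ l := by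
  obtain ⟨h1, h2⟩ := h
  have h3 : (l - (1 + α ^ 2)) * (l - β ^ 2) = (α * β) ^ 2 := by linear_combination h1
  have h4 := sq_nonneg (α * β)
  constructor
  · by_contra! hc
    nlinarith
  · by_contra! hc
    nlinarith

lemma IsTopEig.upper {α β l : ℝ} (h : IsTopEig α β l) (x y : ℝ) :
    x ^ 2 + (α * x + β * y) ^ 2 ≤ l * (x ^ 2 + y ^ 2) := by
  obtain ⟨hA, hD⟩ := h.diag
  have := quad_nonneg (A := l - (1 + α ^ 2)) (B := -(α * β)) (D := l - β ^ 2)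
    (by linarith) (by linarith) (by linear_combination h.1) x y
  nlinarith

lemma IsTopEig.lower {α β l : ℝ} (h : IsTopEig α β l) (x y : ℝ) :
    β ^ 2 * (x ^ 2 + y ^ 2) ≤ l * (x ^ 2 + (α * x + β * y) ^ 2) := by
  obtain ⟨hA, hD⟩ := h.diag
  have hl : 0 ≤ l := by nlinarith [sq_nonneg β]
  have := quad_nonneg (A := l * (1 + α ^ 2) - β ^ 2) (B := l * (α * β)) (D := (l - 1) * β ^ 2)
    (by nlinarith [mul_nonneg hl (sq_nonneg α)])
    (mul_nonneg (by nlinarith [sq_nonneg α]) (sq_nonneg β))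
    (by linear_combination β ^ 2 * h.1) x y
  nlinarith

/-- `‖Qᵀ H Q‖² ≤ l² ‖H‖²` in the Frobenius norm: `Qᵀ` acts on the columns, then on the rows. -/
lemma IsTopEig.hess {α β l : ℝ} (h : IsTopEig α β l) (a b c d : ℝ) :
    a ^ 2 + (α * a + β * b) ^ 2 + (α * a + β * c) ^ 2
      + (α * (α * a + β * c) + β * (α * b + β * d)) ^ 2
      ≤ l ^ 2 * (a ^ 2 + b ^ 2 + c ^ 2 + d ^ 2) := by
  have hl : 0 ≤ l := by nlinarith [h.diag.2, sq_nonneg β]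
  have h1 := h.upper a b
  have h2 := h.upper (α * a + β * c) (α * b + β * d)
  have h3 := mul_le_mul_of_nonneg_left (h.upper a c) hl
  have h4 := mul_le_mul_of_nonneg_left (h.upper b d) hl
  nlinarith

/-- The secant bound for the Euclidean norm on the cone `0 ≤ m ≤ n`; here `√2 - 1 ≤ 5 / 12`. -/
lemma sqrt_secant {m n : ℝ} (hm : 0 ≤ m) (hmn : m ≤ n) :
    √(m ^ 2 + n ^ 2) ≤ n + 5 / 12 * m := by
  apply Real.sqrt_le_iff.2 ⟨by linarith, by nlinarith⟩

/-- One of the four polynomial inequalities behind the bounds for `s³`, according to the sign of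
`ε` and the order of `a = |α|` and `e = |ε|`. In the coordinates `m = min a e`, `t = |a - e|` and
`w = 1 / 2 - m - t` of the triangle of parameters, the difference of the two sides is a sum of
nonnegative multiples of monomials in `m`, `t`, some of them times `w`. -/
lemma poly_pos_a {a e : ℝ} (ha : 0 ≤ a) (hae : a ≤ e) (he : e ≤ 1 / 2) :
    (1 + e + (a ^ 2 + e ^ 2)) * (1 + e / 2 + (e + 5 / 12 * a) / 2 + a ^ 2 * (1 / 8))
      + (e + 5 / 12 * a) * (1 + e)
      ≤ (1 + e) * (1 + 3 / 2 * a + 2 * e + 3 / 2 * a ^ 2 + e ^ 2) := by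
  obtain ⟨t, rfl⟩ : ∃ t, e = a + t := ⟨e - a, by ring⟩
  have ht : 0 ≤ t := by linarith
  have hw : 0 ≤ 1 / 2 - a - t := by linarith
  have M : ∀ i j : ℕ, 0 ≤ a ^ i * t ^ j := fun i j => by positivity
  have W : ∀ i j : ℕ, 0 ≤ a ^ i * t ^ j * (1 / 2 - a - t) := fun i j => by positivity
  linarith [M 1 0, M 0 1, M 2 0, M 1 1, M 0 2, M 3 0, M 2 1, M 1 2, M 0 3,
    M 4 0, M 3 1, M 2 2, M 1 3, M 0 4, M 5 0, M 4 1, M 3 2, M 2 3, M 1 4,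
    W 1 0, W 0 1, W 2 0, W 1 1, W 0 2, W 3 0, W 2 1, W 1 2, W 0 3,
    W 4 0, W 3 1, W 2 2, W 1 3]

/-- The inequality of `poly_pos_a` in the case `ε ≥ 0`, `|ε| ≤ |α|`. -/
lemma poly_pos_b {a e : ℝ} (he0 : 0 ≤ e) (hae : e ≤ a) (he : a ≤ 1 / 2) :
    (1 + e + (a ^ 2 + e ^ 2)) * (1 + e / 2 + (a + 5 / 12 * e) / 2 + a ^ 2 * (1 / 8))
      + (a + 5 / 12 * e) * (1 + e)
      ≤ (1 + e) * (1 + 3 / 2 * a + 2 * e + 3 / 2 * a ^ 2 + e ^ 2) := by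
  obtain ⟨t, rfl⟩ : ∃ t, a = e + t := ⟨a - e, by ring⟩
  have ht : 0 ≤ t := by linarith
  have hw : 0 ≤ 1 / 2 - e - t := by linarith
  have M : ∀ i j : ℕ, 0 ≤ e ^ i * t ^ j := fun i j => by positivity
  have W : ∀ i j : ℕ, 0 ≤ e ^ i * t ^ j * (1 / 2 - e - t) := fun i j => by positivity
  linarith [M 1 0, M 0 1, M 2 0, M 1 1, M 0 2, M 3 0, M 2 1, M 1 2, M 0 3,
    M 4 0, M 3 1, M 2 2, M 1 3, M 0 4, M 5 0, M 4 1, M 3 2, M 2 3, M 1 4,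
    W 1 0, W 0 1, W 2 0, W 1 1, W 0 2, W 3 0, W 2 1, W 1 2, W 0 3,
    W 4 0, W 3 1, W 2 2, W 1 3]

/-- The inequality of `poly_pos_a` in the case `ε ≤ 0`, `|α| ≤ |ε|`. -/
lemma poly_neg_a {a e : ℝ} (ha : 0 ≤ a) (hae : a ≤ e) (he : e ≤ 1 / 2) :
    (1 - e + (a ^ 2 + e ^ 2)) * (1 - e / 2 + (e + 5 / 12 * a) / 2 + a ^ 2 * (1 / 8 + e / 12))
      + (e + 5 / 12 * a) * (1 - e)
      ≤ (1 - e) * (1 + 3 / 2 * a + e + 3 / 2 * a ^ 2 + 2 * e ^ 2) := by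
  obtain ⟨t, rfl⟩ : ∃ t, e = a + t := ⟨e - a, by ring⟩
  have ht : 0 ≤ t := by linarith
  have hw : 0 ≤ 1 / 2 - a - t := by linarith
  have M : ∀ i j : ℕ, 0 ≤ a ^ i * t ^ j := fun i j => by positivity
  have W : ∀ i j : ℕ, 0 ≤ a ^ i * t ^ j * (1 / 2 - a - t) := fun i j => by positivity
  linarith [M 1 0, M 0 1, M 2 0, M 1 1, M 0 2, M 3 0, M 2 1, M 1 2, M 0 3,
    M 4 0, M 3 1, M 2 2, M 1 3, M 0 4, M 5 0, M 4 1, M 3 2, M 2 3, M 1 4,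
    W 1 0, W 0 1, W 2 0, W 1 1, W 0 2, W 3 0, W 2 1, W 1 2, W 0 3,
    W 4 0, W 3 1, W 2 2, W 1 3]

/-- The inequality of `poly_pos_a` in the case `ε ≤ 0`, `|ε| ≤ |α|`. -/
lemma poly_neg_b {a e : ℝ} (he0 : 0 ≤ e) (hae : e ≤ a) (he : a ≤ 1 / 2) :
    (1 - e + (a ^ 2 + e ^ 2)) * (1 - e / 2 + (a + 5 / 12 * e) / 2 + a ^ 2 * (1 / 8 + e / 12))
      + (a + 5 / 12 * e) * (1 - e)
      ≤ (1 - e) * (1 + 3 / 2 * a + e + 3 / 2 * a ^ 2 + 2 * e ^ 2) := by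
  obtain ⟨t, rfl⟩ : ∃ t, a = e + t := ⟨a - e, by ring⟩
  have ht : 0 ≤ t := by linarith
  have hw : 0 ≤ 1 / 2 - e - t := by linarith
  have M : ∀ i j : ℕ, 0 ≤ e ^ i * t ^ j := fun i j => by positivity
  have W : ∀ i j : ℕ, 0 ≤ e ^ i * t ^ j * (1 / 2 - e - t) := fun i j => by positivity
  linarith [M 1 0, M 0 1, M 2 0, M 1 1, M 0 2, M 3 0, M 2 1, M 1 2, M 0 3,
    M 4 0, M 3 1, M 2 2, M 1 3, M 0 4, M 5 0, M 4 1, M 3 2, M 2 3, M 1 4,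
    W 1 0, W 0 1, W 2 0, W 1 1, W 0 2, W 3 0, W 2 1, W 1 2, W 0 3,
    W 4 0, W 3 1, W 2 2, W 1 3]

/-- The largest singular value `s = (√(α² + ε²) + √(α² + (2 + ε)²)) / 2` of `[[1, α], [0, 1 + ε]]`,
together with the reduction of an upper bound for `s³` to one that is affine in any
majorant `ρ` of `√(α² + ε²)`; `q` absorbs the correction of the second square root. -/
lemma exists_sv {α ε : ℝ} (hε : |ε| ≤ 1 / 2) :
    ∃ s : ℝ, 0 < s ∧ IsTopEig α (1 + ε) (s ^ 2) ∧
      ∀ ρ q : ℝ, √(|α| ^ 2 + |ε| ^ 2) ≤ ρ → α ^ 2 ≤ 4 * (2 + ε) * q →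
        s ^ 3 ≤ (1 + ε + (|α| ^ 2 + |ε| ^ 2)) * (1 + ε / 2 + ρ / 2 + q) + ρ * (1 + ε) := by
  obtain ⟨he1, he2⟩ := abs_le.1 hε
  have hr0 : 0 ≤ |α| ^ 2 + |ε| ^ 2 := by positivity
  set r := √(|α| ^ 2 + |ε| ^ 2) with hr
  have hr2 : r ^ 2 = |α| ^ 2 + |ε| ^ 2 := Real.sq_sqrt hr0
  have hr2' : r ^ 2 = α ^ 2 + ε ^ 2 := by rw [hr2, sq_abs, sq_abs]
  have hrn : 0 ≤ r := Real.sqrt_nonneg _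
  have hpp : 0 < r ^ 2 + 4 * (1 + ε) := by nlinarith
  set p := √(r ^ 2 + 4 * (1 + ε)) with hp
  have hp2 : p ^ 2 = r ^ 2 + 4 * (1 + ε) := Real.sq_sqrt hpp.le
  have hp0 : 0 < p := Real.sqrt_pos.2 hpp
  have hs : ((r + p) / 2) ^ 2 = r * ((r + p) / 2) + (1 + ε) := by linear_combination hp2 / 4
  have hs0 : 0 < (r + p) / 2 := by positivity
  have hsr : r ≤ 2 * ((r + p) / 2) := by linarith
  generalize hsd : (r + p) / 2 = s at hs hs0 hsr
  refine ⟨s, hs0, ⟨?_, ?_⟩, ?_⟩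
  · linear_combination (s ^ 2 - (1 + ε) + r * s) * hs + s ^ 2 * hr2'
  · nlinarith
  · intro ρ q hρ hq
    -- the tangent-line bound for the square root at `(2 + ε)²`
    have hpb : p ≤ 2 + ε + 2 * q := by
      have hq0 : 0 ≤ q := by
        by_contra! hc
        nlinarith [sq_nonneg α]
      refine Real.sqrt_le_iff.2 ⟨by linarith, ?_⟩
      nlinarith
    have hsb : s ≤ 1 + ε / 2 + ρ / 2 + q := by linarith
    have h3 : s ^ 3 = (1 + ε + r ^ 2) * s + r * (1 + ε) := by
      linear_combination (s + r) * hs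
    rw [h3, ← hr2]
    have h4 : 0 ≤ 1 + ε + r ^ 2 := by nlinarith
    nlinarith [mul_le_mul_of_nonneg_left hsb h4]

lemma sv_bound_pos {α ε : ℝ} (hα : |α| ≤ 1 / 2) (hε : |ε| ≤ 1 / 2) (h0 : 0 ≤ ε) :
    ∃ s : ℝ, 0 < s ∧ IsTopEig α (1 + ε) (s ^ 2) ∧
      s ^ 3 ≤ (1 + ε) * (1 + 3 / 2 * |α| + 2 * |ε| + 3 / 2 * α ^ 2 + ε ^ 2) := by
  obtain ⟨s, hs, hs1, hs2⟩ := exists_sv (α := α) hε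
  refine ⟨s, hs, hs1, ?_⟩
  have hq : α ^ 2 ≤ 4 * (2 + ε) * (|α| ^ 2 * (1 / 8)) := by
    rw [sq_abs]; nlinarith [mul_nonneg h0 (sq_nonneg α)]
  have he : |ε| = ε := abs_of_nonneg h0
  rcases le_total |α| |ε| with h | h
  · have h1 := hs2 _ _ (sqrt_secant (abs_nonneg α) h) hq
    have h2 := poly_pos_a (abs_nonneg α) h hε
    rw [← sq_abs α]
    rw [he] at h1 h2 ⊢
    exact h1.trans h2
  · have h1 := hs2 _ _ ((congrArg _ (add_comm _ _)).trans_le (sqrt_secant (abs_nonneg ε) h)) hq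
    have h2 := poly_pos_b (abs_nonneg ε) h hα
    rw [← sq_abs α]
    rw [he] at h1 h2 ⊢
    exact h1.trans h2

lemma sv_bound_neg {α ε : ℝ} (hα : |α| ≤ 1 / 2) (hε : |ε| ≤ 1 / 2) (h0 : ε ≤ 0) :
    ∃ s : ℝ, 0 < s ∧ IsTopEig α (1 + ε) (s ^ 2) ∧
      s ^ 3 ≤ (1 + ε) * (1 + 3 / 2 * |α| + |ε| + 3 / 2 * α ^ 2 + 2 * ε ^ 2) := by
  obtain ⟨s, hs, hs1, hs2⟩ := exists_sv (α := α) hε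
  refine ⟨s, hs, hs1, ?_⟩
  obtain ⟨e, rfl⟩ : ∃ e, ε = -e := ⟨-ε, by ring⟩
  have he : |-e| = e := by rw [abs_of_nonpos h0, neg_neg]
  rw [he] at hε hs2 ⊢
  have he0 : 0 ≤ e := by linarith
  have hq : α ^ 2 ≤ 4 * (2 + -e) * (|α| ^ 2 * (1 / 8 + e / 12)) := by
    have h1 : 1 ≤ 4 * (2 + -e) * (1 / 8 + e / 12) := by nlinarith
    rw [sq_abs]; nlinarith [mul_le_mul_of_nonneg_left h1 (sq_nonneg α)]
  rcases le_total |α| e with h | h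
  · have h1 := hs2 _ _ (sqrt_secant (abs_nonneg α) h) hq
    have h2 := poly_neg_a (abs_nonneg α) h hε
    rw [← sq_abs α]
    linarith
  · have h1 := hs2 _ _ ((congrArg _ (add_comm _ _)).trans_le (sqrt_secant he0 h)) hq
    have h2 := poly_neg_b he0 h hα
    rw [← sq_abs α]
    linarith

/-! ### Triangles and partial derivatives -/

lemma isCompact_Tri (O A B : Pt) : IsCompact (Tri O A B) :=
  (Set.toFinite _).isCompact_convexHull ℝ

lemma Tri_mem (O A B : Pt) : O ∈ Tri O A B ∧ A ∈ Tri O A B ∧ B ∈ Tri O A B := by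
  refine ⟨subset_convexHull ℝ _ ?_, subset_convexHull ℝ _ ?_, subset_convexHull ℝ _ ?_⟩ <;> simp

lemma contDiffOn_fderiv_apply {w : Pt → ℝ} {U : Set Pt} {m n : WithTop ℕ∞} (hU : IsOpen U)
    (hw : ContDiffOn ℝ n w U) (hmn : m + 1 ≤ n) (v : Pt) :
    ContDiffOn ℝ m (fun p => fderiv ℝ w p v) U :=
  (hw.fderiv_of_isOpen hU hmn).clm_apply contDiffOn_const

lemma fderiv_eq_pd (u : Pt → ℝ) (p v : Pt) :
    fderiv ℝ u p v = v.1 * pdx u p + v.2 * pdy u p := by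
  have hv : v = v.1 • ((1, 0) : Pt) + v.2 • ((0, 1) : Pt) := by ext <;> simp
  conv_lhs => rw [hv]
  simp only [map_add, map_smul, smul_eq_mul, pdx, pdy]

/-! ### Edge means of the gradient -/

lemma elen_pos {v : Pt} (hv : v ≠ 0) : 0 < elen v := by
  refine Real.sqrt_pos.2 ?_
  by_contra! h
  refine hv (Prod.ext ?_ ?_)
  · exact pow_eq_zero_iff two_ne_zero |>.1 (by nlinarith [sq_nonneg v.1, sq_nonneg v.2] :
      v.1 ^ 2 = 0)
  · exact pow_eq_zero_iff two_ne_zero |>.1 (by nlinarith [sq_nonneg v.1, sq_nonneg v.2] :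
      v.2 ^ 2 = 0)

/-- If `u` vanishes at both ends of an edge and its mean normal derivative on the edge is zero,
then the mean of the whole gradient is zero: the tangential part integrates to a difference of
end values. -/
lemma edge_grad_zero {u : Pt → ℝ} {U : Set Pt} {P Q R : Pt} (hU : IsOpen U)
    (hu : ContDiffOn ℝ 2 u U) (hseg : ∀ t ∈ Set.Icc (0 : ℝ) 1, P + t • (Q - P) ∈ U)
    (hPQ : Q - P ≠ 0) (hP : u P = 0) (hQ : u Q = 0)
    (hn : edgeInt (normalDeriv u P Q R) P Q = 0) (v : Pt) :
    ∫ t in (0 : ℝ)..1, fderiv ℝ u (P + t • (Q - P)) v = 0 := by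
  have hseg' : ∀ t ∈ Set.uIcc (0 : ℝ) 1, P + t • (Q - P) ∈ U := by
    rwa [Set.uIcc_of_le zero_le_one]
  have hint : ∀ w : Pt, IntervalIntegrable
      (fun t : ℝ => fderiv ℝ u (P + t • (Q - P)) w) volume 0 1 := by
    intro w
    refine ContinuousOn.intervalIntegrable ?_
    have h1 := (contDiffOn_fderiv_apply (m := 1) hU hu (by norm_num) w).continuousOn
    exact h1.comp (by fun_prop) hseg'
  have htan : ∫ t in (0 : ℝ)..1, fderiv ℝ u (P + t • (Q - P)) (Q - P) = 0 := by
    rw [intervalIntegral.integral_eq_sub_of_hasDerivAt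
      (f := fun t : ℝ => u (P + t • (Q - P))) _ (hint _)]
    · simp [hP, hQ]
    · intro t ht
      have h1 : DifferentiableAt ℝ u (P + t • (Q - P)) :=
        (hu.differentiableOn (by norm_num)).differentiableAt (hU.mem_nhds (hseg' t ht))
      have h2 : HasDerivAt (fun t : ℝ => P + t • (Q - P)) (Q - P) t := by
        simpa using ((hasDerivAt_id t).smul_const (Q - P)).const_add P
      exact h1.hasFDerivAt.comp_hasDerivAt t h2
  have hl := elen_pos hPQ
  have hnor : ∫ t in (0 : ℝ)..1,
      fderiv ℝ u (P + t • (Q - P)) ((Q - P).2, -((Q - P).1)) = 0 := by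
    have h1 := (mul_eq_zero.1 hn).resolve_left hl.ne'
    simp only [normalDeriv, outNormal, map_smul, smul_eq_mul,
      intervalIntegral.integral_const_mul] at h1
    refine (mul_eq_zero.1 h1).resolve_left ?_
    split_ifs
    · exact (inv_pos.2 hl).ne'
    · exact (neg_neg_of_pos (inv_pos.2 hl)).ne
  have hl2 : 0 < (Q - P).1 ^ 2 + (Q - P).2 ^ 2 := Real.sqrt_pos.1 hl
  generalize Q - P = d at *
  -- decomposition of `|d|² v` along `d` and its rotation
  have hv : (d.1 ^ 2 + d.2 ^ 2) • v
      = (v.1 * d.1 + v.2 * d.2) • d + (v.1 * d.2 - v.2 * d.1) • ((d.2, -d.1) : Pt) := by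
    ext <;> simp <;> ring
  have key : (d.1 ^ 2 + d.2 ^ 2) * ∫ t in (0 : ℝ)..1, fderiv ℝ u (P + t • d) v = 0 := by
    rw [← intervalIntegral.integral_const_mul]
    have : ∀ t : ℝ, (d.1 ^ 2 + d.2 ^ 2) * fderiv ℝ u (P + t • d) v
        = (v.1 * d.1 + v.2 * d.2) * fderiv ℝ u (P + t • d) d
          + (v.1 * d.2 - v.2 * d.1) * fderiv ℝ u (P + t • d) (d.2, -d.1) := by
      intro t
      rw [← smul_eq_mul, ← map_smul, hv, map_add, map_smul, map_smul, smul_eq_mul, smul_eq_mul]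
    simp_rw [this]
    rw [intervalIntegral.integral_add ((hint _).const_mul _) ((hint _).const_mul _),
      intervalIntegral.integral_const_mul, intervalIntegral.integral_const_mul, htan, hnor]
    ring
  exact (mul_eq_zero.1 key).resolve_left hl2.ne'

/-- Transport of vanishing edge conditions through an invertible linear map `L`. -/
lemma edge_transport {u : Pt → ℝ} {U : Set Pt} (L : Pt ≃L[ℝ] Pt) {P Q R R' : Pt} (hU : IsOpen U)
    (hu : ContDiffOn ℝ 2 u U)
    (hseg : ∀ t ∈ Set.Icc (0 : ℝ) 1, L P + t • (L Q - L P) ∈ U)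
    (hPQ : Q - P ≠ 0) (hP : u (L P) = 0) (hQ : u (L Q) = 0)
    (hn : edgeInt (normalDeriv u (L P) (L Q) R') (L P) (L Q) = 0) :
    edgeInt (normalDeriv (u ∘ L) P Q R) P Q = 0 := by
  have hLPQ : L Q - L P ≠ 0 := by
    rw [← map_sub]
    exact (map_ne_zero_iff L L.injective).2 hPQ
  have h := edge_grad_zero hU hu hseg hLPQ hP hQ hn (L (outNormal P Q R))
  simp only [edgeInt, normalDeriv, L.comp_right_fderiv, ContinuousLinearMap.comp_apply,
    ContinuousLinearEquiv.coe_coe, map_add, map_smul, map_sub]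
  rw [h, mul_zero]

/-! ### Pulling back along the linear map -/

/-- `Qmap α β` as an invertible continuous linear map. -/
def Qequiv (α β : ℝ) (hβ : β ≠ 0) : Pt ≃L[ℝ] Pt :=
  LinearEquiv.toContinuousLinearEquiv
    { toFun := Qmap α β
      invFun := Qinv α β
      map_add' := fun p q => by ext <;> simp [Qmap] <;> ring
      map_smul' := fun c p => by ext <;> simp [Qmap] <;> ring
      left_inv := fun p => by ext <;> simp [Qmap, Qinv] <;> field_simp <;> ring
      right_inv := fun p => by ext <;> simp [Qmap, Qinv] <;> field_simp <;> ring }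

lemma Qequiv_apply (α β : ℝ) (hβ : β ≠ 0) (p : Pt) :
    Qequiv α β hβ p = (p.1 + α * p.2, β * p.2) := rfl

lemma image_Tri (L : Pt ≃L[ℝ] Pt) (O A B : Pt) : L '' Tri O A B = Tri (L O) (L A) (L B) := by
  have h := LinearMap.image_convexHull (𝕜 := ℝ) (L : Pt →ₗ[ℝ] Pt) {O, A, B}
  simpa [Tri, Set.image_insert_eq, Set.image_pair] using h

lemma MemVFM.comp {u : Pt → ℝ} (L : Pt ≃L[ℝ] Pt) {O A B : Pt} (hOA : A - O ≠ 0)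
    (hAB : B - A ≠ 0) (hBO : O - B ≠ 0) (h : MemVFM u (L O) (L A) (L B)) :
    MemVFM (u ∘ L) O A B := by
  obtain ⟨⟨U, hU, hKU, hu⟩, hO, hA, hB, h1, h2, h3⟩ := h
  obtain ⟨mO, mA, mB⟩ := Tri_mem (L O) (L A) (L B)
  have hc : Convex ℝ (Tri (L O) (L A) (L B)) := convex_convexHull ℝ _
  refine ⟨⟨L ⁻¹' U, hU.preimage L.continuous, ?_, ?_⟩, hO, hA, hB, ?_, ?_, ?_⟩
  · rw [← Set.image_subset_iff, image_Tri]
    exact hKU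
  · exact hu.comp L.contDiff.contDiffOn (fun _ hx => hx)
  · exact edge_transport L hU hu (fun t ht => hKU (hc.add_smul_sub_mem mO mA ht)) hOA hO hA h1
  · exact edge_transport L hU hu (fun t ht => hKU (hc.add_smul_sub_mem mA mB ht)) hAB hA hB h2
  · exact edge_transport L hU hu (fun t ht => hKU (hc.add_smul_sub_mem mB mO ht)) hBO hB hO h3

/-- Linear change of variables. The value of the Jacobian factor is irrelevant, since it
multiplies both norms that are compared. -/
lemma integral_pullback (L : Pt ≃L[ℝ] Pt) (K : Set Pt) (hK : MeasurableSet K) (f : Pt → ℝ) :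
    ∫ p in L '' K, f p = |(L : Pt →L[ℝ] Pt).det| * ∫ p in K, f (L p) := by
  rw [integral_image_eq_integral_abs_det_fderiv_smul volume hK
    (f' := fun _ => (L : Pt →L[ℝ] Pt)) (fun x _ => L.hasFDerivAt.hasFDerivWithinAt)
    L.injective.injOn, ← integral_const_mul]
  rfl

lemma pdx_comp (u : Pt → ℝ) (α β : ℝ) (hβ : β ≠ 0) :
    pdx (u ∘ Qequiv α β hβ) = pdx u ∘ Qequiv α β hβ := by
  funext p
  simp [pdx, ContinuousLinearEquiv.comp_right_fderiv, Qequiv_apply]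

lemma pdy_comp (u : Pt → ℝ) (α β : ℝ) (hβ : β ≠ 0) :
    pdy (u ∘ Qequiv α β hβ) = (fun p => α * pdx u p + β * pdy u p) ∘ Qequiv α β hβ := by
  funext p
  rw [pdy, ContinuousLinearEquiv.comp_right_fderiv, ContinuousLinearMap.comp_apply, fderiv_eq_pd]
  simp [Qequiv_apply]

lemma pd_lin {f g : Pt → ℝ} {p : Pt} (hf : DifferentiableAt ℝ f p) (hg : DifferentiableAt ℝ g p)
    (α β : ℝ) : pdx (fun q => α * f q + β * g q) p = α * pdx f p + β * pdx g p ∧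
      pdy (fun q => α * f q + β * g q) p = α * pdy f p + β * pdy g p := by
  have h : fderiv ℝ (fun q => α * f q + β * g q) p = α • fderiv ℝ f p + β • fderiv ℝ g p :=
    ((hf.hasFDerivAt.const_mul α).add (hg.hasFDerivAt.const_mul β)).fderiv
  simp [pdx, pdy, h]

/-- The transfer inequality: if `l` is the larger eigenvalue of `Q Qᵀ`, the constant of the
inequality `‖∇u‖ ≤ C ‖D²u‖` changes at most by the factor `√(l³) / |β|`. -/
lemma transfer {α β l C : ℝ} (hβ : β ≠ 0) (hl : IsTopEig α β l) {u : Pt → ℝ} {K : Set Pt}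
    (hKc : IsCompact K) (hu : Smooth2 u (Qequiv α β hβ '' K))
    (h : h1sq (u ∘ Qequiv α β hβ) K ≤ C ^ 2 * h2sq (u ∘ Qequiv α β hβ) K) :
    β ^ 2 * h1sq u (Qequiv α β hβ '' K) ≤ l ^ 3 * C ^ 2 * h2sq u (Qequiv α β hβ '' K) := by
  obtain ⟨U, hU, hKU, hu⟩ := hu
  have hl0 : 0 ≤ l := by nlinarith [hl.diag.2, sq_nonneg β]
  have hm := hKc.measurableSet
  have hx : ContDiffOn ℝ 1 (pdx u) U := contDiffOn_fderiv_apply hU hu (by norm_num) _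
  have hy : ContDiffOn ℝ 1 (pdy u) U := contDiffOn_fderiv_apply hU hu (by norm_num) _
  have hxx : ContinuousOn (pdx (pdx u)) U :=
    (contDiffOn_fderiv_apply (m := 0) hU hx (by norm_num) _).continuousOn
  have hxy : ContinuousOn (pdy (pdx u)) U :=
    (contDiffOn_fderiv_apply (m := 0) hU hx (by norm_num) _).continuousOn
  have hyx : ContinuousOn (pdx (pdy u)) U :=
    (contDiffOn_fderiv_apply (m := 0) hU hy (by norm_num) _).continuousOn
  have hyy : ContinuousOn (pdy (pdy u)) U :=
    (contDiffOn_fderiv_apply (m := 0) hU hy (by norm_num) _).continuousOn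
  set L := Qequiv α β hβ with hL
  have hmap : Set.MapsTo L K U := fun p hp => hKU ⟨p, hp, rfl⟩
  have pull : ∀ {f : Pt → ℝ}, ContinuousOn f U → ContinuousOn (fun p => f (L p)) K :=
    fun hf => hf.comp L.continuous.continuousOn hmap
  have cx := pull hx.continuousOn
  have cy := pull hy.continuousOn
  have cxx := pull hxx
  have cxy := pull hxy
  have cyx := pull hyx
  have cyy := pull hyy
  -- first derivatives
  have e1 : β ^ 2 * ∫ p in K, ((pdx u (L p)) ^ 2 + (pdy u (L p)) ^ 2) ≤ l * h1sq (u ∘ L) K := by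
    rw [h1sq, ← integral_const_mul, ← integral_const_mul, hL, pdx_comp, pdy_comp, ← hL]
    simp only [Function.comp_apply]
    refine setIntegral_mono_on ?_ ?_ hm (fun p _ => hl.lower _ _)
    · exact ContinuousOn.integrableOn_compact hKc (by fun_prop)
    · exact ContinuousOn.integrableOn_compact hKc (by fun_prop)
  -- second derivatives
  have e2 : h2sq (u ∘ L) K ≤ l ^ 2 * ∫ p in K, ((pdx (pdx u) (L p)) ^ 2
      + (pdy (pdx u) (L p)) ^ 2 + (pdx (pdy u) (L p)) ^ 2 + (pdy (pdy u) (L p)) ^ 2) := by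
    have hpt : ∀ p ∈ K, (pdx (pdx (u ∘ L)) p) ^ 2 + (pdy (pdx (u ∘ L)) p) ^ 2
        + (pdx (pdy (u ∘ L)) p) ^ 2 + (pdy (pdy (u ∘ L)) p) ^ 2
        = (pdx (pdx u) (L p)) ^ 2 + (α * pdx (pdx u) (L p) + β * pdy (pdx u) (L p)) ^ 2
          + (α * pdx (pdx u) (L p) + β * pdx (pdy u) (L p)) ^ 2
          + (α * (α * pdx (pdx u) (L p) + β * pdx (pdy u) (L p))
            + β * (α * pdy (pdx u) (L p) + β * pdy (pdy u) (L p))) ^ 2 := by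
      intro p hp
      have dx : DifferentiableAt ℝ (pdx u) (L p) :=
        (hx.differentiableOn (by norm_num)).differentiableAt (hU.mem_nhds (hmap hp))
      have dy : DifferentiableAt ℝ (pdy u) (L p) :=
        (hy.differentiableOn (by norm_num)).differentiableAt (hU.mem_nhds (hmap hp))
      obtain ⟨k1, k2⟩ := pd_lin dx dy α β
      rw [hL] at k1 k2 ⊢
      simp only [pdx_comp, pdy_comp, Function.comp_apply, k1, k2]
    rw [h2sq, setIntegral_congr_fun hm hpt, ← integral_const_mul]
    refine setIntegral_mono_on ?_ ?_ hm (fun p _ => hl.hess _ _ _ _)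
    · exact ContinuousOn.integrableOn_compact hKc (by fun_prop)
    · exact ContinuousOn.integrableOn_compact hKc (by fun_prop)
  rw [h1sq, h2sq, integral_pullback L K hm, integral_pullback L K hm]
  generalize hI1 : (∫ p in K, ((pdx u (L p)) ^ 2 + (pdy u (L p)) ^ 2)) = I₁ at *
  generalize hI2 : (∫ p in K, ((pdx (pdx u) (L p)) ^ 2
      + (pdy (pdx u) (L p)) ^ 2 + (pdx (pdy u) (L p)) ^ 2 + (pdy (pdy u) (L p)) ^ 2)) = I₂ at *
  have e3 : β ^ 2 * I₁ ≤ l ^ 3 * C ^ 2 * I₂ :=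
    calc β ^ 2 * I₁ ≤ l * (C ^ 2 * h2sq (u ∘ L) K) :=
          e1.trans (mul_le_mul_of_nonneg_left h hl0)
      _ ≤ l * (C ^ 2 * (l ^ 2 * I₂)) := by gcongr
      _ = l ^ 3 * C ^ 2 * I₂ := by ring
  linarith [mul_le_mul_of_nonneg_left e3 (abs_nonneg (L : Pt →L[ℝ] Pt).det)]

lemma h1sq_nonneg (u : Pt → ℝ) (K : Set Pt) : 0 ≤ h1sq u K :=
  integral_nonneg fun _ => by positivity

lemma h2sq_nonneg (u : Pt → ℝ) (K : Set Pt) : 0 ≤ h2sq u K :=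
  integral_nonneg fun _ => by positivity

/-- The perturbation bound for any factor `M ≥ s³ / β`, with `s` the largest singular value of
the matrix taking `K` to `K̃`. -/
lemma perturb {a b α β s C M : ℝ} (hb : 0 < b) (hβ : 0 < β) (hC : 0 ≤ C) (hs : 0 < s)
    (hl : IsTopEig α β (s ^ 2)) (hM : s ^ 3 ≤ β * M)
    (hK : ∀ u : Pt → ℝ, MemVFM u ((0, 0) : Pt) ((1, 0) : Pt) ((a, b) : Pt) →
      h1norm u (Tri ((0, 0) : Pt) ((1, 0) : Pt) ((a, b) : Pt)) ≤
        C * h2norm u (Tri ((0, 0) : Pt) ((1, 0) : Pt) ((a, b) : Pt)))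
    (u : Pt → ℝ) (hu : MemVFM u ((0, 0) : Pt) ((1, 0) : Pt) ((a + α * b, β * b) : Pt)) :
    h1norm u (Tri ((0, 0) : Pt) ((1, 0) : Pt) ((a + α * b, β * b) : Pt)) ≤
      M * C * h2norm u (Tri ((0, 0) : Pt) ((1, 0) : Pt) ((a + α * b, β * b) : Pt)) := by
  set L := Qequiv α β hβ.ne' with hL
  have hLO : L (0, 0) = (0, 0) := by simp [hL, Qequiv_apply]
  have hLA : L (1, 0) = (1, 0) := by simp [hL, Qequiv_apply]
  have hLB : L (a, b) = (a + α * b, β * b) := by simp [hL, Qequiv_apply]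
  rw [← hLB, ← hLO, ← hLA] at hu ⊢
  have hmem : MemVFM (u ∘ L) (0, 0) (1, 0) (a, b) := by
    refine hu.comp L ?_ ?_ ?_ <;> simp [hb.ne']
  have hk := hK _ hmem
  have hk2 : h1sq (u ∘ L) (Tri (0, 0) (1, 0) (a, b))
      ≤ C ^ 2 * h2sq (u ∘ L) (Tri (0, 0) (1, 0) (a, b)) := by
    have := (Real.sqrt_le_left (by exact mul_nonneg hC (Real.sqrt_nonneg _))).1 hk
    rwa [h2norm, mul_pow, Real.sq_sqrt (h2sq_nonneg _ _)] at this
  have hsm := hu.1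
  rw [← image_Tri] at hsm ⊢
  have ht := transfer hβ.ne' hl (isCompact_Tri _ _ _) hsm hk2
  rw [← hL] at ht
  have h2 := h2sq_nonneg u (L '' Tri (0, 0) (1, 0) (a, b))
  have hM0 : 0 ≤ M := by
    by_contra! hc
    nlinarith [pow_pos hs 3]
  refine Real.sqrt_le_iff.2 ⟨by unfold h2norm; positivity, ?_⟩
  rw [h2norm, mul_pow, Real.sq_sqrt h2]
  have h3 : (s ^ 2) ^ 3 ≤ β ^ 2 * M ^ 2 := by
    have := pow_le_pow_left₀ (by positivity) hM 2
    linarith [this, (by ring : (s ^ 3) ^ 2 = (s ^ 2) ^ 3), (by ring : (β * M) ^ 2 = β ^ 2 * M ^ 2)]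
  have h4 := mul_le_mul_of_nonneg_right h3 (mul_nonneg (sq_nonneg C) h2)
  refine le_of_mul_le_mul_left ?_ (by positivity : 0 < β ^ 2)
  linarith

/-! ### The perturbation theorem -/

/-- Theorem 5, perturbation of `C₁`: for `|α|, |ε| ≤ 1/2`, if
`‖∇u‖_K ≤ C ‖D²u‖_K` on `V_FM(K)` with third vertex `(a,b)`, then on `K̃` with third vertex
`(a + αb, (1+ε)b)` the constant is multiplied by `1 + (3/2)|α| + 2|ε| + (3/2)α² + ε²` when
`ε ≥ 0`, and by `1 + (3/2)|α| + |ε| + (3/2)α² + 2ε²` when `ε ≤ 0`. -/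
theorem stmt_18 (a b α ε : ℝ) (hb : 0 < b) (hα : |α| ≤ 1 / 2) (hε : |ε| ≤ 1 / 2)
    (C : ℝ) (hC : 0 ≤ C)
    (hK : ∀ u : Pt → ℝ, MemVFM u ((0, 0) : Pt) ((1, 0) : Pt) ((a, b) : Pt) →
      h1norm u (Tri ((0, 0) : Pt) ((1, 0) : Pt) ((a, b) : Pt)) ≤
        C * h2norm u (Tri ((0, 0) : Pt) ((1, 0) : Pt) ((a, b) : Pt))) :
    (0 ≤ ε → ∀ u : Pt → ℝ,
      MemVFM u ((0, 0) : Pt) ((1, 0) : Pt) ((a + α * b, (1 + ε) * b) : Pt) →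
      h1norm u (Tri ((0, 0) : Pt) ((1, 0) : Pt) ((a + α * b, (1 + ε) * b) : Pt)) ≤
        (1 + 3 / 2 * |α| + 2 * |ε| + 3 / 2 * α ^ 2 + ε ^ 2) * C *
          h2norm u (Tri ((0, 0) : Pt) ((1, 0) : Pt) ((a + α * b, (1 + ε) * b) : Pt))) ∧
    (ε ≤ 0 → ∀ u : Pt → ℝ,
      MemVFM u ((0, 0) : Pt) ((1, 0) : Pt) ((a + α * b, (1 + ε) * b) : Pt) →
      h1norm u (Tri ((0, 0) : Pt) ((1, 0) : Pt) ((a + α * b, (1 + ε) * b) : Pt)) ≤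
        (1 + 3 / 2 * |α| + |ε| + 3 / 2 * α ^ 2 + 2 * ε ^ 2) * C *
          h2norm u (Tri ((0, 0) : Pt) ((1, 0) : Pt) ((a + α * b, (1 + ε) * b) : Pt))) := by
  have h1 : 0 < 1 + ε := by linarith [(abs_le.1 hε).1]
  constructor
  · intro h0
    obtain ⟨s, hs, hl, hM⟩ := sv_bound_pos hα hε h0
    exact perturb hb h1 hC hs hl hM hK
  · intro h0
    obtain ⟨s, hs, hl, hM⟩ := sv_bound_neg hα hε h0
    exact perturb hb h1 hC hs hl hM hK
end
end
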